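/- arXiv:1510.02903 — 2 statements merged into one kernel-verified Lean document; each statement's English description precedes it below -/
import Mathlib

section
/- Assume condition (A1) holds with limit I ∈ (0,∞), and let α ↦ ϱ_α ∈ (0,1) satisfy ϱ_α → 0 as α → 0. Then for every fixed ν ≥ 0, liminf_{α→0} (1/|log α|)·inf_{τ∈Δ(α,ϱ_α)} R_ν(τ) ≥ 1/I and liminf_{α→0} (1/|log α|)·inf_{τ∈Δ(α,ϱ_α)} R*_ν(τ) ≥ 1/I; consequently the same lower bounds hold with R_ν(τ) replaced by sup_{ν≥0} R_ν(τ) and with R*_ν(τ) replaced by sup_{ν≥0} R*_ν(τ). -/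
/-! The lower bound comes from a change of measure at a single time. Membership in `Δ(α,ϱ)` forces
`P_∞(τ ≤ ℓ) ≤ α (1-ϱ)^{-ℓ}` for every `ℓ`, because `P_∞(τ ≤ k)` increases in `k` and the geometric
prior has tail mass `(1-ϱ)^ℓ`. For `N ≥ 1` the event `{τ ≤ ν+N}` lies in `F (ν+N)`, so
`P_ν(τ ≤ ν+N) ≤ P_ν(Z_{ν+N}^ν > a) + e^a P_∞(τ ≤ ν+N)` for every `a`.

Fix `0 < c < 1` and take `N = ⌊c|log α|/I⌋`, `a = N·I(2-c)`. As `α → 0` the first term vanishes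
by (A1), since `I(2-c) > I`, and the second one vanishes since `c(2-c) = 1-(1-c)² < 1` while
`(1-ϱ_α)^{-(ν+N)} = exp(o(|log α|))`. The bounds do not depend on `τ`, hence uniformly over the class
`R_ν(τ) ≥ N·P_ν(τ > ν+N) ≥ N(1-o(1)) ~ c|log α|/I`, and letting `c → 1` gives the bound for `R_ν`.
The other risks dominate `R_ν` (for the suprema, `R_0`). -/


open MeasureTheory Filter Set Topology ENNReal

noncomputable section

/-- A general change-point model: a filtration `F` on `Ω`, probability measures `P k`
(the change occurs immediately after time `k`) and `Pinf` (no change), such that `P k`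
and `Pinf` agree on `F n` for `n ≤ k` and are mutually absolutely continuous
on `F n` for `n > k`. -/
structure ChangePointModel (Ω : Type) [m0 : MeasurableSpace Ω] where
  F : ℕ → MeasurableSpace Ω
  F_le : ∀ n, F n ≤ m0
  F_mono : Monotone F
  F_zero : F 0 = ⊥
  P : ℕ → Measure Ω
  Pinf : Measure Ω
  P_prob : ∀ k, IsProbabilityMeasure (P k)
  Pinf_prob : IsProbabilityMeasure Pinf
  agree : ∀ k n : ℕ, n ≤ k → (P k).trim (F_le n) = Pinf.trim (F_le n)
  ac₁ : ∀ k n : ℕ, k < n → (P k).trim (F_le n) ≪ Pinf.trim (F_le n)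
  ac₂ : ∀ k n : ℕ, k < n → Pinf.trim (F_le n) ≪ (P k).trim (F_le n)

namespace ChangePointModel

variable {Ω : Type} [m0 : MeasurableSpace Ω] (M : ChangePointModel Ω)

/-- The log-likelihood ratio `Z n k = log (d(P k|F n)/d(P∞|F n))`. -/
def Z (n k : ℕ) (ω : Ω) : ℝ :=
  Real.log ((((M.P k).trim (M.F_le n)).rnDeriv (M.Pinf.trim (M.F_le n))) ω).toReal

/-- A detection procedure: a stopping time of the filtration `F` with values in `{1,2,…,∞}`. -/
def IsDetection (τ : Ω → ℕ∞) : Prop :=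
  (∀ ω, 1 ≤ τ ω) ∧ ∀ n : ℕ, MeasurableSet[M.F n] {ω | τ ω ≤ (n : ℕ∞)}

/-- The detection risk `R_ν(τ) = E_ν (τ - ν)⁺`. -/
def risk (ν : ℕ) (τ : Ω → ℕ∞) : ℝ≥0∞ :=
  ∫⁻ ω, ((τ ω - (ν : ℕ∞) : ℕ∞) : ℝ≥0∞) ∂(M.P ν)

/-- The conditional detection risk `R*_ν(τ) = E_ν (τ - ν | τ > ν)`. -/
def crisk (ν : ℕ) (τ : Ω → ℕ∞) : ℝ≥0∞ :=
  M.risk ν τ / M.P ν {ω | (ν : ℕ∞) < τ ω}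

/-- The moment-`ℓ` detection risk `E_ν ((τ - ν)⁺)^ℓ`. -/
def riskPow (ℓ : ℝ) (ν : ℕ) (τ : Ω → ℕ∞) : ℝ≥0∞ :=
  ∫⁻ ω, ((τ ω - (ν : ℕ∞) : ℕ∞) : ℝ≥0∞) ^ ℓ ∂(M.P ν)

/-- The conditional moment-`ℓ` detection risk `E_ν ((τ - ν)^ℓ | τ > ν)`. -/
def criskPow (ℓ : ℝ) (ν : ℕ) (τ : Ω → ℕ∞) : ℝ≥0∞ :=
  M.riskPow ℓ ν τ / M.P ν {ω | (ν : ℕ∞) < τ ω}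

/-- The Bayesian class `Δ(α,ϱ)` of detection procedures with weighted probability of
false alarm at most `α` (geometric prior with parameter `ϱ`). -/
def Delta (α ϱ : ℝ) : Set (Ω → ℕ∞) :=
  {τ | M.IsDetection τ ∧
    ∑' k : ℕ, ENNReal.ofReal (ϱ * (1 - ϱ) ^ k) * M.Pinf {ω | τ ω ≤ (k : ℕ∞)}
      ≤ ENNReal.ofReal α}

/-- The Shiryaev–Roberts statistic `R_n = ∑_{k=1}^n exp (Z_n^{k-1})`. -/
def SRstat (n : ℕ) (ω : Ω) : ℝ :=
  ∑ k ∈ Finset.range n, Real.exp (M.Z n k ω)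

/-- The Shiryaev–Roberts procedure with threshold `h`. -/
def SR (h : ℝ) (ω : Ω) : ℕ∞ :=
  sInf {n : ℕ∞ | ∃ m : ℕ, n = (m : ℕ∞) ∧ 1 ≤ m ∧ h ≤ M.SRstat m ω}

/-- Condition (A1): `Z (k+n) k / n → I` almost surely under `P k`, for every `k`. -/
def CondA1 (I : ℝ) : Prop :=
  ∀ k : ℕ, ∀ᵐ ω ∂(M.P k),
    Tendsto (fun n : ℕ => M.Z (k + n) k ω / n) atTop (𝓝 I)

/-- Condition (A2): uniform complete convergence of `Z (k+n) k / n` to `I`. -/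
def CondA2 (I : ℝ) : Prop :=
  ∀ ε : ℝ, 0 < ε →
    (∑' n : ℕ, ⨆ k : ℕ,
      M.P k {ω | ε < |M.Z (k + (n + 1)) k ω / (n + 1) - I|}) < ⊤

/-- Uniform `r`-complete convergence of `Z (k+n) k / n` to `I`. -/
def CondAr (r I : ℝ) : Prop :=
  ∀ ε : ℝ, 0 < ε →
    (∑' n : ℕ, ENNReal.ofReal ((n + 1 : ℝ) ^ (r - 1)) * ⨆ k : ℕ,
      M.P k {ω | ε < |M.Z (k + (n + 1)) k ω / (n + 1) - I|}) < ⊤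

/-- The class `H(β,k*,m*)` : local probability of a false alarm in windows of
length `m*` starting at `1 ≤ k ≤ k* - m*` is at most `β`. -/
def Hclass (β : ℝ) (kstar mstar : ℕ) : Set (Ω → ℕ∞) :=
  {τ | M.IsDetection τ ∧ ∀ k : ℕ, 1 ≤ k → k + mstar ≤ kstar →
    M.Pinf {ω | (k : ℕ∞) ≤ τ ω ∧ τ ω < ((k + mstar : ℕ) : ℕ∞)} ≤ ENNReal.ofReal β}

/-- The class `H*(β,k*,m*)` : local conditional probability of a false alarm
`P_∞(τ < k+m* | τ > k)` is at most `β` for `1 ≤ k ≤ k* - m*`. -/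
def HclassStar (β : ℝ) (kstar mstar : ℕ) : Set (Ω → ℕ∞) :=
  {τ | M.IsDetection τ ∧ ∀ k : ℕ, 1 ≤ k → k + mstar ≤ kstar →
    M.Pinf {ω | (k : ℕ∞) < τ ω ∧ τ ω < ((k + mstar : ℕ) : ℕ∞)}
        / M.Pinf {ω | (k : ℕ∞) < τ ω} ≤ ENNReal.ofReal β}

end ChangePointModel

/-- `ϱ_{1,β} = 1/(1+|log β|)`. -/
def rho1 (β : ℝ) : ℝ := 1 / (1 + |Real.log β|)

/-- `ϱ_{2,β} = ϱ_{1,β}/(1+|log|log β||)`. -/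
def rho2 (β : ℝ) : ℝ := rho1 β / (1 + |Real.log (|Real.log β|)|)

/-- `α₁(β,m*) = β + (1-ϱ_{1,β})^{m*+1}`. -/
def alpha1 (β : ℝ) (m : ℕ) : ℝ := β + (1 - rho1 β) ^ (m + 1)

/-- `α₂(β,k*) = β (1-ϱ_{2,β})^{k*}`. -/
def alpha2 (β : ℝ) (k : ℕ) : ℝ := β * (1 - rho2 β) ^ k

/-- `α₃(β,k*) = β (1-ϱ_{2,β})^{k*} / (1+β)`. -/
def alpha3 (β : ℝ) (k : ℕ) : ℝ := β * (1 - rho2 β) ^ k / (1 + β)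

namespace ChangePointModel

variable {Ω : Type} [m0 : MeasurableSpace Ω] (M : ChangePointModel Ω)

/-- Change of measure: on `F n` the density of `P k` is at most `e^a` where `Z ≤ a`. -/
lemma measure_le_add_exp {k n : ℕ} (hkn : k < n) {A : Set Ω} (hA : MeasurableSet[M.F n] A)
    (a : ℝ) :
    M.P k A ≤ M.P k {ω | a < M.Z n k ω} + ENNReal.ofReal (Real.exp a) * M.Pinf A := by
  have := M.P_prob k
  have := M.Pinf_prob
  have hZ : Measurable[M.F n] (M.Z n k) :=
    Real.measurable_log.comp (Measure.measurable_rnDeriv _ _).ennreal_toReal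
  have hS : MeasurableSet[M.F n] {ω | a < M.Z n k ω} :=
    hZ measurableSet_Ioi
  have hB : MeasurableSet[M.F n] (A \ {ω | a < M.Z n k ω}) := hA.diff hS
  have h1 : M.P k A ≤ M.P k {ω | a < M.Z n k ω} + M.P k (A \ {ω | a < M.Z n k ω}) := by
    refine (measure_mono ?_).trans (measure_union_le _ _)
    intro ω hω
    by_cases h : a < M.Z n k ω
    · exact Or.inl h
    · exact Or.inr ⟨hω, h⟩
  refine h1.trans (add_le_add le_rfl ?_)
  set μ := (M.P k).trim (M.F_le n) with hμ
  set π := M.Pinf.trim (M.F_le n) with hπ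
  have hac : μ ≪ π := M.ac₁ k n hkn
  calc M.P k (A \ {ω | a < M.Z n k ω}) = μ (A \ {ω | a < M.Z n k ω}) :=
        (trim_measurableSet_eq _ hB).symm
    _ = ∫⁻ ω in (A \ {ω | a < M.Z n k ω}), μ.rnDeriv π ω ∂π :=
        (Measure.setLIntegral_rnDeriv hac _).symm
    _ ≤ ∫⁻ _ in (A \ {ω | a < M.Z n k ω}), ENNReal.ofReal (Real.exp a) ∂π := by
        refine setLIntegral_mono_ae measurable_const.aemeasurable ?_
        filter_upwards [Measure.rnDeriv_lt_top μ π] with ω hω hωB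
        have hle : Real.log (μ.rnDeriv π ω).toReal ≤ a := not_lt.mp hωB.2
        rw [← ENNReal.ofReal_toReal hω.ne]
        refine ENNReal.ofReal_le_ofReal ?_
        rcases (ENNReal.toReal_nonneg (a := μ.rnDeriv π ω)).eq_or_lt with h0 | h0
        · rw [← h0]; positivity
        · exact (Real.log_le_iff_le_exp h0).mp hle
    _ = ENNReal.ofReal (Real.exp a) * π (A \ {ω | a < M.Z n k ω}) := by
        rw [setLIntegral_const]
    _ = ENNReal.ofReal (Real.exp a) * M.Pinf (A \ {ω | a < M.Z n k ω}) := by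
        rw [hπ, trim_measurableSet_eq _ hB]
    _ ≤ _ := by gcongr; exact sdiff_subset

/-- The weighted false-alarm constraint bounds the false-alarm probability at every fixed time. -/
lemma Delta_bound {α ϱ : ℝ} (hϱ : ϱ ∈ Set.Ioo (0 : ℝ) 1) {τ : Ω → ℕ∞}
    (hτ : τ ∈ M.Delta α ϱ) (l : ℕ) :
    ENNReal.ofReal ((1 - ϱ) ^ l) * M.Pinf {ω | τ ω ≤ (l : ℕ∞)} ≤ ENNReal.ofReal α := by
  refine le_trans ?_ hτ.2
  have h1 : 0 ≤ 1 - ϱ := by linarith [hϱ.2]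
  have hg : HasSum (fun k : ℕ => ϱ * (1 - ϱ) ^ (k + l)) ((1 - ϱ) ^ l) := by
    have := (hasSum_geometric_of_lt_one h1 (by linarith [hϱ.1])).mul_left (ϱ * (1 - ϱ) ^ l)
    have e : ϱ * (1 - ϱ) ^ l * (1 - (1 - ϱ))⁻¹ = (1 - ϱ) ^ l := by
      rw [_root_.sub_sub_cancel, mul_comm ϱ, mul_assoc, mul_inv_cancel₀ hϱ.1.ne', mul_one]
    rw [e] at this
    simpa only [pow_add, mul_assoc, mul_comm ((1 - ϱ) ^ l)] using this
  rw [← hg.tsum_eq, ENNReal.ofReal_tsum_of_nonneg (fun k => mul_nonneg hϱ.1.le (pow_nonneg h1 _))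
    hg.summable, ← ENNReal.tsum_mul_right]
  refine le_trans ?_ (ENNReal.tsum_comp_le_tsum_of_injective (add_left_injective l) _)
  refine ENNReal.tsum_le_tsum fun k => ?_
  gcongr
  exact Nat.le_add_left l k

lemma mul_le_risk {τ : Ω → ℕ∞} (hτ : M.IsDetection τ) (ν N : ℕ) :
    (N : ℝ≥0∞) * (1 - M.P ν {ω | τ ω ≤ ((ν + N : ℕ) : ℕ∞)}) ≤ M.risk ν τ := by
  have := M.P_prob ν
  have hA : MeasurableSet {ω | τ ω ≤ ((ν + N : ℕ) : ℕ∞)} := M.F_le _ _ (hτ.2 _)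
  rw [← prob_compl_eq_one_sub hA, ← lintegral_indicator_const hA.compl]
  refine lintegral_mono fun ω => ?_
  by_cases h : ω ∈ {ω | τ ω ≤ ((ν + N : ℕ) : ℕ∞)}ᶜ
  · rw [indicator_of_mem h]
    have h' : ((ν + N : ℕ) : ℕ∞) ≤ τ ω := (lt_of_not_ge fun h' => h h').le
    have : (N : ℕ∞) ≤ τ ω - ν := by
      refine le_trans ?_ (tsub_le_tsub_right h' (ν : ℕ∞))
      rw [← ENat.natCast_sub]; simp
    calc (N : ℝ≥0∞) = ((N : ℕ∞) : ℝ≥0∞) := by simp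
      _ ≤ _ := by exact_mod_cast this
  · rw [indicator_of_notMem h]; exact zero_le

lemma tendsto_Z_gt {I : ℝ} (hA1 : M.CondA1 I) (ν : ℕ) {J : ℝ} (hJ : I < J) :
    Tendsto (fun N : ℕ => M.P ν {ω | (N : ℝ) * J < M.Z (ν + N) ν ω}) atTop (𝓝 0) := by
  have := M.P_prob ν
  have hmeas : ∀ n : ℕ, AEStronglyMeasurable (fun ω => M.Z (ν + n) ν ω / n) (M.P ν) := by
    intro n
    have hZ : Measurable[M.F (ν + n)] (M.Z (ν + n) ν) :=
      Real.measurable_log.comp (Measure.measurable_rnDeriv _ _).ennreal_toReal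
    exact ((hZ.mono (M.F_le _) le_rfl).div_const _).aestronglyMeasurable
  have h := tendstoInMeasure_of_tendsto_ae hmeas (hA1 ν)
  have h2 := h (ENNReal.ofReal (J - I)) (by simpa using hJ)
  refine tendsto_of_tendsto_of_tendsto_of_le_of_le' tendsto_const_nhds h2
    (Eventually.of_forall fun _ => zero_le) ?_
  filter_upwards [eventually_gt_atTop 0] with N hN
  refine measure_mono fun ω hω => ?_
  have hN' : (0 : ℝ) < N := by exact_mod_cast hN
  have : J < M.Z (ν + N) ν ω / N := by
    rw [lt_div_iff₀ hN', mul_comm]; exact hω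
  simp only [mem_ofPred_eq, edist_dist, Real.dist_eq]
  exact ENNReal.ofReal_le_ofReal (le_trans (by linarith) (le_abs_self _))

/-- The non-asymptotic lower bound, uniform over `Δ(α,ϱ)`; the exponent collects the likelihood
factor `e^a`, the level `α` and the prior factor `(1-ϱ)^{-(ν+N)}`. -/
lemma uniform_bound {α ϱ : ℝ} (hα : 0 < α) (hϱ : ϱ ∈ Set.Ioo (0 : ℝ) 1) (ν N : ℕ) (J : ℝ)
    {τ : Ω → ℕ∞} (hτ : τ ∈ M.Delta α ϱ) :
    (N : ℝ≥0∞) * (1 - (M.P ν {ω | (N : ℝ) * J < M.Z (ν + N) ν ω} +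
      ENNReal.ofReal (Real.exp (N * J + Real.log α + ((ν : ℝ) + N) * (-Real.log (1 - ϱ))))))
      ≤ M.risk ν τ := by
  rcases Nat.eq_zero_or_pos N with rfl | hN
  · simp
  refine le_trans ?_ (M.mul_le_risk hτ.1 ν N)
  gcongr
  refine (M.measure_le_add_exp (Nat.lt_add_of_pos_right hN) (hτ.1.2 _) (N * J)).trans ?_
  gcongr
  have h1 : 0 < 1 - ϱ := by linarith [hϱ.2]
  have hb := M.Delta_bound hϱ hτ (ν + N)
  have hq : 0 < (1 - ϱ) ^ (ν + N) := pow_pos h1 _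
  have hexp : Real.exp (N * J + Real.log α + ((ν : ℝ) + N) * (-Real.log (1 - ϱ)))
      = Real.exp (N * J) * (α / (1 - ϱ) ^ (ν + N)) := by
    rw [Real.exp_add, Real.exp_add, Real.exp_log hα, mul_neg, Real.exp_neg,
      ← Real.exp_log hq, Real.log_pow]
    push_cast
    rw [mul_assoc, div_eq_mul_inv]
  rw [hexp, ENNReal.ofReal_mul (Real.exp_pos _).le, ENNReal.ofReal_div_of_pos hq]
  gcongr
  rw [ENNReal.le_div_iff_mul_le (Or.inl (by simpa using hq)) (Or.inl ENNReal.ofReal_ne_top),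
    mul_comm]
  exact hb

lemma risk_le_crisk (ν : ℕ) (τ : Ω → ℕ∞) : M.risk ν τ ≤ M.crisk ν τ := by
  have := M.P_prob ν
  unfold crisk
  calc M.risk ν τ = M.risk ν τ / 1 := by simp
    _ ≤ _ := ENNReal.div_le_div_left prob_le_one _

/-- The lower bound with `c/I` in place of `1/I`, for any functional dominating `R_ν`. -/
lemma liminf_ge_of_lt_one {I : ℝ} (hI : 0 < I) (hA1 : M.CondA1 I)
    {ϱ : ℝ → ℝ} (hϱmem : ∀ α ∈ Set.Ioo (0 : ℝ) 1, ϱ α ∈ Set.Ioo (0 : ℝ) 1)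
    (hϱ0 : Tendsto ϱ (𝓝[>] (0 : ℝ)) (𝓝 0)) (ν : ℕ) {Φ : (Ω → ℕ∞) → ℝ≥0∞}
    (hΦ : ∀ τ, M.risk ν τ ≤ Φ τ) {c : ℝ} (hc : c ∈ Set.Ioo (0 : ℝ) 1) :
    ENNReal.ofReal (c / I) ≤ Filter.liminf (fun α : ℝ =>
      (⨅ τ ∈ M.Delta α (ϱ α), Φ τ) / ENNReal.ofReal |Real.log α|) (𝓝[>] (0 : ℝ)) := by
  obtain ⟨hc0, hc1⟩ := hc
  have hcI : 0 < c / I := div_pos hc0 hI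
  have hL : Tendsto (fun α : ℝ => -Real.log α) (𝓝[>] 0) atTop :=
    tendsto_neg_atBot_atTop.comp Real.tendsto_log_nhdsGT_zero
  set N : ℝ → ℕ := fun α => ⌊(c / I) * (-Real.log α)⌋₊ with hNdef
  have hN : Tendsto N (𝓝[>] 0) atTop :=
    tendsto_nat_floor_atTop.comp (hL.const_mul_atTop hcI)
  have hr : Tendsto (fun α => -Real.log (1 - ϱ α)) (𝓝[>] 0) (𝓝 0) := by
    have h1 : Tendsto (fun α => 1 - ϱ α) (𝓝[>] 0) (𝓝 1) := by
      simpa using hϱ0.const_sub 1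
    simpa using (h1.log one_ne_zero).neg
  have hmem : ∀ᶠ α : ℝ in 𝓝[>] 0, α ∈ Set.Ioo (0 : ℝ) 1 := Ioo_mem_nhdsGT one_pos
  -- The exponent is at most `-L (g - (c/I) r) + ν r` with `L = |log α|`, `r → 0`, `g = (1-c)² > 0`.
  have hexp : Tendsto (fun α => (N α : ℝ) * (I * (2 - c)) + Real.log α +
      ((ν : ℝ) + N α) * (-Real.log (1 - ϱ α))) (𝓝[>] 0) atBot := by
    have hg : 0 < (1 - c) ^ 2 := by have : 0 < 1 - c := by linarith
                                    positivity
    have hlim : Tendsto (fun α => (-Real.log α) *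
        ((c / I) * (-Real.log (1 - ϱ α)) - (1 - c) ^ 2)) (𝓝[>] 0) atBot := by
      refine hL.atTop_mul_neg (C := (c / I) * 0 - (1 - c) ^ 2) (by linarith) ?_
      exact (hr.const_mul _).sub_const _
    have hlim2 := hlim.atBot_add (hr.const_mul (ν : ℝ))
    refine tendsto_atBot_mono' _ ?_ hlim2
    filter_upwards [hmem] with α hα
    have hLpos : 0 < -Real.log α := by
      have := Real.log_neg hα.1 hα.2
      linarith
    have hNle : (N α : ℝ) ≤ (c / I) * (-Real.log α) :=
      Nat.floor_le (by positivity)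
    have hϱ := hϱmem α hα
    have hrpos : 0 ≤ -Real.log (1 - ϱ α) := by
      have := Real.log_nonpos (x := 1 - ϱ α) (by linarith [hϱ.2]) (by linarith [hϱ.1])
      linarith
    have hJ : 0 ≤ I * (2 - c) := mul_nonneg hI.le (by linarith)
    have e1 := mul_le_mul_of_nonneg_right hNle hJ
    have e2 := mul_le_mul_of_nonneg_right hNle hrpos
    have e3 : (c / I) * (-Real.log α) * (I * (2 - c)) = (-Real.log α) * (c * (2 - c)) := by
      field_simp
    rw [e3] at e1
    nlinarith
  have hb : Tendsto (fun α => ENNReal.ofReal (Real.exp ((N α : ℝ) * (I * (2 - c)) + Real.log α +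
      ((ν : ℝ) + N α) * (-Real.log (1 - ϱ α))))) (𝓝[>] 0) (𝓝 0) := by
    have := ENNReal.tendsto_ofReal (Real.tendsto_exp_atBot.comp hexp)
    simpa using this
  have hp := (M.tendsto_Z_gt hA1 ν (J := I * (2 - c)) (by nlinarith)).comp hN
  have hquot : Tendsto (fun α => (N α : ℝ≥0∞) / ENNReal.ofReal |Real.log α|) (𝓝[>] 0)
      (𝓝 (ENNReal.ofReal (c / I))) := by
    have h1 := (tendsto_nat_floor_mul_div_atTop hcI.le).comp hL
    refine (ENNReal.tendsto_ofReal h1).congr' ?_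
    filter_upwards [hmem] with α hα
    have hneg := Real.log_neg hα.1 hα.2
    simp only [Function.comp, hNdef]
    rw [abs_of_neg hneg, ENNReal.ofReal_div_of_pos (by linarith), ENNReal.ofReal_natCast]
  have hfac : Tendsto (fun α => 1 - (M.P ν {ω | (N α : ℝ) * (I * (2 - c)) < M.Z (ν + N α) ν ω} +
      ENNReal.ofReal (Real.exp ((N α : ℝ) * (I * (2 - c)) + Real.log α +
      ((ν : ℝ) + N α) * (-Real.log (1 - ϱ α)))))) (𝓝[>] 0) (𝓝 (1 : ℝ≥0∞)) := by
    have := ENNReal.Tendsto.sub (tendsto_const_nhds (x := (1 : ℝ≥0∞))) (hp.add hb)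
      (Or.inl ENNReal.one_ne_top)
    simpa using this
  have hprod := ENNReal.Tendsto.mul hquot (Or.inr ENNReal.one_ne_top) hfac
    (Or.inl one_ne_zero)
  rw [mul_one] at hprod
  rw [← hprod.liminf_eq]
  refine liminf_le_liminf ?_
  filter_upwards [hmem] with α hα
  rw [div_eq_mul_inv, mul_right_comm, ← div_eq_mul_inv]
  gcongr
  exact le_iInf₂ fun τ hτ =>
    (M.uniform_bound hα.1 (hϱmem α hα) ν (N α) (I * (2 - c)) hτ).trans (hΦ τ)

lemma liminf_ge {I : ℝ} (hI : 0 < I) (hA1 : M.CondA1 I)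
    {ϱ : ℝ → ℝ} (hϱmem : ∀ α ∈ Set.Ioo (0 : ℝ) 1, ϱ α ∈ Set.Ioo (0 : ℝ) 1)
    (hϱ0 : Tendsto ϱ (𝓝[>] (0 : ℝ)) (𝓝 0)) (ν : ℕ) {Φ : (Ω → ℕ∞) → ℝ≥0∞}
    (hΦ : ∀ τ, M.risk ν τ ≤ Φ τ) :
    ENNReal.ofReal (1 / I) ≤ Filter.liminf (fun α : ℝ =>
      (⨅ τ ∈ M.Delta α (ϱ α), Φ τ) / ENNReal.ofReal |Real.log α|) (𝓝[>] (0 : ℝ)) := by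
  have ht : Tendsto (fun c : ℝ => ENNReal.ofReal (c / I)) (𝓝[<] 1)
      (𝓝 (ENNReal.ofReal (1 / I))) :=
    ENNReal.tendsto_ofReal ((tendsto_id.mono_left nhdsWithin_le_nhds).div_const I)
  refine le_of_tendsto ht ?_
  filter_upwards [Ioo_mem_nhdsLT (zero_lt_one (α := ℝ))] with c hc
  exact M.liminf_ge_of_lt_one hI hA1 hϱmem hϱ0 ν hΦ hc

end ChangePointModel

/-- Under condition (A1) with limit `I ∈ (0,∞)` and `ϱ_α → 0`,
the asymptotic lower bounds `liminf_{α→0} (1/|log α|)·inf_{τ∈Δ(α,ϱ_α)} R_ν(τ) ≥ 1/I`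
and `liminf_{α→0} (1/|log α|)·inf_{τ∈Δ(α,ϱ_α)} R*_ν(τ) ≥ 1/I` hold for every `ν ≥ 0`,
and consequently also for the suprema over `ν` of the risks. -/
theorem statement0
    {Ω : Type} [m0 : MeasurableSpace Ω] (M : ChangePointModel Ω)
    (I : ℝ) (hI : 0 < I) (hA1 : M.CondA1 I)
    (ϱ : ℝ → ℝ) (hϱmem : ∀ α ∈ Set.Ioo (0 : ℝ) 1, ϱ α ∈ Set.Ioo (0 : ℝ) 1)
    (hϱ0 : Tendsto ϱ (𝓝[>] (0 : ℝ)) (𝓝 0)) :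
    (∀ ν : ℕ,
      ENNReal.ofReal (1 / I) ≤
        Filter.liminf (fun α : ℝ =>
          (⨅ τ ∈ M.Delta α (ϱ α), M.risk ν τ) / ENNReal.ofReal |Real.log α|)
          (𝓝[>] (0 : ℝ))) ∧
    (∀ ν : ℕ,
      ENNReal.ofReal (1 / I) ≤
        Filter.liminf (fun α : ℝ =>
          (⨅ τ ∈ M.Delta α (ϱ α), M.crisk ν τ) / ENNReal.ofReal |Real.log α|)
          (𝓝[>] (0 : ℝ))) ∧
    (ENNReal.ofReal (1 / I) ≤
        Filter.liminf (fun α : ℝ =>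
          (⨅ τ ∈ M.Delta α (ϱ α), ⨆ ν : ℕ, M.risk ν τ) / ENNReal.ofReal |Real.log α|)
          (𝓝[>] (0 : ℝ))) ∧
    (ENNReal.ofReal (1 / I) ≤
        Filter.liminf (fun α : ℝ =>
          (⨅ τ ∈ M.Delta α (ϱ α), ⨆ ν : ℕ, M.crisk ν τ) / ENNReal.ofReal |Real.log α|)
          (𝓝[>] (0 : ℝ))) := by
  exact ⟨fun ν => M.liminf_ge hI hA1 hϱmem hϱ0 ν fun _ => le_rfl,
    fun ν => M.liminf_ge hI hA1 hϱmem hϱ0 ν fun τ => M.risk_le_crisk ν τ,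
    M.liminf_ge hI hA1 hϱmem hϱ0 0 fun τ => le_iSup (fun ν => M.risk ν τ) 0,
    M.liminf_ge hI hA1 hϱmem hϱ0 0 fun τ =>
      (M.risk_le_crisk 0 τ).trans (le_iSup (fun ν => M.crisk ν τ) 0)⟩
end
end

section
/- Assume condition (A2) holds with limit I ∈ (0,∞) and that ϱ_α ∈ (0,1) satisfies ϱ_α → 0 and |log ϱ_α|/|log α| → 0 as α → 0. Let T_α = T(h_α) be the SR procedure with threshold h_α = (1−α)/(ϱ_α α). Then (i) limsup_{α→0} (1/|log α|)·sup_{ν≥0} R_ν(T_α) ≤ 1/I; and (ii) if in addition k*_α satisfies k*_α → ∞ and |log α| + k*_α·log(1−ϱ_α) → +∞ as α → 0, then limsup_{α→0} (1/|log α|)·max_{0≤ν≤k*_α} R*_ν(T_α) ≤ 1/I. -/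
/-!
Delay. Since `R_{ν+n} ≥ exp (Z_{ν+n}^ν)`, a delay `T(h) - ν > n` forces `Z_{ν+n}^ν < log h`. As
soon as `n ≥ N`, where `log h < (I - ε) N`, this makes `Z_{ν+n}^ν / n` differ from `I` by more
than `ε`. Summing tail probabilities gives `R_ν(T(h)) ≤ N + C_ε` for all `ν`, where `C_ε` is the
sum of worst-case deviation probabilities, finite by (A2) (`risk_SR_le`). For
`h = (1-α)/(ϱ_α α)` one has `log h ≤ |log α| + |log ϱ_α|`, so dividing by `|log α|` and letting
`α → 0`, then `ε → 0`, proves (i).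

False alarms. For (ii) it remains to show that `P_ν(T(h) > ν)` tends to `1` uniformly in
`ν ≤ k*_α`. As `{T(h) > ν}` lies in `F_ν`, this probability equals `P_∞(T(h) > ν)`, and
`P_∞(T(h) ≤ ν) ≤ ν / h` by a change of measure on the events `{T(h) = n}` (`mul_Pinf_SR_le`).
Finally `k*_α ϱ_α ≤ -k*_α log (1 - ϱ_α) ≤ |log α|` for small `α`, so that
`ν / h ≤ |log α| α / (1 - α) → 0`.
-/

open MeasureTheory Filter Set Topology ENNReal

noncomputable section

namespace ChangePointModel

variable {Ω : Type} [m0 : MeasurableSpace Ω] (M : ChangePointModel Ω)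

/-! ### The Shiryaev–Roberts stopping time -/

lemma measurable_Z (n k : ℕ) : Measurable[M.F n] (M.Z n k) :=
  Real.measurable_log.comp (Measure.measurable_rnDeriv _ _).ennreal_toReal

lemma measurable_SRstat (n : ℕ) : Measurable[M.F n] (M.SRstat n) := by
  unfold SRstat
  exact Finset.measurable_sum _ fun k _ => Real.measurable_exp.comp (M.measurable_Z n k)

lemma SR_le_of_le {h : ℝ} {m : ℕ} {ω : Ω} (hm : 1 ≤ m) (h1 : h ≤ M.SRstat m ω) :
    M.SR h ω ≤ m :=
  sInf_le ⟨m, rfl, hm, h1⟩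

lemma SR_le_iff {h : ℝ} {n : ℕ} {ω : Ω} :
    M.SR h ω ≤ n ↔ ∃ m, 1 ≤ m ∧ m ≤ n ∧ h ≤ M.SRstat m ω := by
  constructor
  · intro hle
    have hne : {n : ℕ∞ | ∃ m : ℕ, n = (m : ℕ∞) ∧ 1 ≤ m ∧ h ≤ M.SRstat m ω}.Nonempty := by
      by_contra hemp
      rw [Set.not_nonempty_iff_eq_empty] at hemp
      rw [SR, hemp, sInf_empty] at hle
      exact absurd hle (by simp)
    obtain ⟨m, hm, h1, h2⟩ := csInf_mem hne
    refine ⟨m, h1, ?_, h2⟩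
    have : (m : ℕ∞) ≤ n := hm ▸ hle
    exact_mod_cast this
  · rintro ⟨m, h1, h2, h3⟩
    exact (M.SR_le_of_le h1 h3).trans (by exact_mod_cast h2)

lemma measurableSet_SR_le (h : ℝ) (n : ℕ) : MeasurableSet[M.F n] {ω | M.SR h ω ≤ n} := by
  have : {ω | M.SR h ω ≤ n} = ⋃ m ∈ Finset.Icc 1 n, {ω | h ≤ M.SRstat m ω} := by
    ext ω
    simp only [mem_ofPred_eq, SR_le_iff, mem_iUnion, Finset.mem_Icc, exists_prop, and_assoc]
  rw [this]
  refine @Finset.measurableSet_biUnion _ _ (M.F n) _ _ fun m hm => ?_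
  exact M.F_mono (Finset.mem_Icc.1 hm).2 _
    (M.measurable_SRstat m measurableSet_Ici)

/-- The event `{T(h) ≤ n+1, T(h) > n}`, that is `{T(h) = n+1}`. -/
def stopAt (h : ℝ) (n : ℕ) : Set Ω :=
  {ω | M.SR h ω ≤ (n + 1 : ℕ)} \ {ω | M.SR h ω ≤ n}

lemma measurableSet_stopAt (h : ℝ) (n : ℕ) : MeasurableSet[M.F (n + 1)] (M.stopAt h n) :=
  @MeasurableSet.diff _ (M.F (n + 1)) _ _ (M.measurableSet_SR_le h (n + 1))
    (M.F_mono n.le_succ _ (M.measurableSet_SR_le h n))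

lemma SR_le_eq_biUnion (h : ℝ) (n : ℕ) :
    {ω | M.SR h ω ≤ n} = ⋃ i ∈ Finset.range n, M.stopAt h i := by
  induction n with
  | zero =>
    ext ω
    simp only [mem_ofPred_eq, SR_le_iff]
    simp
  | succ n ih =>
    rw [Finset.range_add_one, Finset.set_biUnion_insert, ← ih, stopAt, Set.sdiff_union_self]
    symm
    refine Set.union_eq_left.2 fun ω hω => ?_
    exact le_trans (show M.SR h ω ≤ n from hω) (by exact_mod_cast n.le_succ)

lemma pairwise_disjoint_stopAt (h : ℝ) : Pairwise (Function.onFun Disjoint (M.stopAt h)) := by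
  have key : ∀ i j, i < j → Disjoint (M.stopAt h i) (M.stopAt h j) := by
    intro i j hij
    rw [Set.disjoint_left]
    rintro ω ⟨h1, -⟩ ⟨-, h2⟩
    have hle : ((i + 1 : ℕ) : ℕ∞) ≤ j := by exact_mod_cast Nat.succ_le_of_lt hij
    exact h2 (le_trans (show M.SR h ω ≤ (i + 1 : ℕ) from h1) hle)
  intro i j hij
  rcases lt_or_gt_of_ne hij with h1 | h1
  · exact key i j h1
  · exact (key j i h1).symm

lemma le_SRstat_of_mem_stopAt {h : ℝ} {n : ℕ} {ω : Ω} (hω : ω ∈ M.stopAt h n) :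
    h ≤ M.SRstat (n + 1) ω := by
  obtain ⟨h1, h2⟩ := hω
  obtain ⟨m, hm1, hm2, hm3⟩ := M.SR_le_iff.1 h1
  rcases hm2.lt_or_eq with hlt | rfl
  · exact absurd (M.SR_le_iff.2 ⟨m, hm1, Nat.lt_succ_iff.1 hlt, hm3⟩) h2
  · exact hm3

/-! ### The false alarm bound -/

/-- Change of measure from `P_∞` to `P_k` on `F n`. -/
lemma setLIntegral_exp_Z {n k : ℕ} (hk : k < n) {A : Set Ω} (hA : MeasurableSet[M.F n] A) :
    ∫⁻ ω in A, ENNReal.ofReal (Real.exp (M.Z n k ω)) ∂(M.Pinf.trim (M.F_le n)) = M.P k A := by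
  have := M.P_prob k
  have := M.Pinf_prob
  have h1 : (fun ω => ENNReal.ofReal (Real.exp (M.Z n k ω))) =ᵐ[M.Pinf.trim (M.F_le n)]
      ((M.P k).trim (M.F_le n)).rnDeriv (M.Pinf.trim (M.F_le n)) := by
    filter_upwards [Measure.rnDeriv_pos' (M.ac₂ k n hk),
      Measure.rnDeriv_ne_top ((M.P k).trim (M.F_le n)) (M.Pinf.trim (M.F_le n))] with ω hp ht
    rw [Z, Real.exp_log (ENNReal.toReal_pos hp.ne' ht), ENNReal.ofReal_toReal ht]
  rw [lintegral_congr_ae (ae_restrict_of_ae h1), Measure.setLIntegral_rnDeriv (M.ac₁ k n hk),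
    trim_measurableSet_eq _ hA]

lemma mul_Pinf_stopAt_le (h : ℝ) (n : ℕ) :
    ENNReal.ofReal h * M.Pinf (M.stopAt h n)
      ≤ ∑ k ∈ Finset.range (n + 1), M.P k (M.stopAt h n) := by
  have hA := M.measurableSet_stopAt h n
  rw [← trim_measurableSet_eq (M.F_le (n + 1)) hA (μ := M.Pinf)]
  calc ENNReal.ofReal h * (M.Pinf.trim (M.F_le (n + 1))) (M.stopAt h n)
      = ∫⁻ _ in M.stopAt h n, ENNReal.ofReal h ∂(M.Pinf.trim (M.F_le (n + 1))) := by
        rw [setLIntegral_const]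
    _ ≤ ∫⁻ ω in M.stopAt h n, ∑ k ∈ Finset.range (n + 1),
          ENNReal.ofReal (Real.exp (M.Z (n + 1) k ω)) ∂(M.Pinf.trim (M.F_le (n + 1))) := by
        refine setLIntegral_mono' hA fun ω hω => ?_
        rw [← ENNReal.ofReal_sum_of_nonneg fun k _ => (Real.exp_pos _).le]
        exact ENNReal.ofReal_le_ofReal (M.le_SRstat_of_mem_stopAt hω)
    _ = ∑ k ∈ Finset.range (n + 1), M.P k (M.stopAt h n) := by
        rw [lintegral_finsetSum]
        · exact Finset.sum_congr rfl fun k hk =>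
            M.setLIntegral_exp_Z (Finset.mem_range.1 hk) hA
        · exact fun k _ => (Real.measurable_exp.comp (M.measurable_Z (n + 1) k)).ennreal_ofReal

/-- The false alarm bound `P_∞(T(h) ≤ ν) ≤ ν / h`. On `{T(h) = n}` the statistic `R_n` is at
least `h`, and integrating it against `P_∞` gives `∑_{k<n} P_k(T(h) = n)`; summing over `n ≤ ν`
leaves at most `ν` probabilities `P_k(k < T(h) ≤ ν)`. -/
lemma mul_Pinf_SR_le (h : ℝ) (ν : ℕ) :
    ENNReal.ofReal h * M.Pinf {ω | M.SR h ω ≤ ν} ≤ ν := by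
  have hm : ∀ n, MeasurableSet (M.stopAt h n) := fun n =>
    M.F_le _ _ (M.measurableSet_stopAt h n)
  have hdec : ∀ μ : Measure Ω,
      μ {ω | M.SR h ω ≤ ν} = ∑ n ∈ Finset.range ν, μ (M.stopAt h n) := by
    intro μ
    rw [SR_le_eq_biUnion, measure_biUnion_finset
      (fun i _ j _ hij => M.pairwise_disjoint_stopAt h hij) fun n _ => hm n]
  calc ENNReal.ofReal h * M.Pinf {ω | M.SR h ω ≤ ν}
      = ∑ n ∈ Finset.range ν, ENNReal.ofReal h * M.Pinf (M.stopAt h n) := by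
        rw [hdec, Finset.mul_sum]
    _ ≤ ∑ n ∈ Finset.range ν, ∑ k ∈ Finset.range ν, M.P k (M.stopAt h n) := by
        refine Finset.sum_le_sum fun n hn => (M.mul_Pinf_stopAt_le h n).trans ?_
        exact Finset.sum_le_sum_of_subset
          (Finset.range_mono (Nat.succ_le_of_lt (Finset.mem_range.1 hn)))
    _ = ∑ k ∈ Finset.range ν, M.P k {ω | M.SR h ω ≤ ν} := by
        rw [Finset.sum_comm]
        exact Finset.sum_congr rfl fun k _ => (hdec _).symm
    _ ≤ ∑ k ∈ Finset.range ν, 1 :=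
        Finset.sum_le_sum fun k _ => by have := M.P_prob k; exact prob_le_one
    _ = ν := by simp

lemma le_P_lt_SR {h p : ℝ} (hh : 0 < h) {ν : ℕ} (hp : ν / h ≤ p) :
    ENNReal.ofReal (1 - p) ≤ M.P ν {ω | (ν : ℕ∞) < M.SR h ω} := by
  have := M.Pinf_prob
  have := M.P_prob ν
  have hms := M.measurableSet_SR_le h ν
  have hcompl : {ω | (ν : ℕ∞) < M.SR h ω} = {ω | M.SR h ω ≤ ν}ᶜ := by
    ext ω; simp
  have hfa : M.P ν {ω | M.SR h ω ≤ ν} ≤ ENNReal.ofReal p := by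
    rw [← trim_measurableSet_eq (M.F_le ν) hms (μ := M.P ν), M.agree ν ν le_rfl,
      trim_measurableSet_eq (M.F_le ν) hms]
    refine le_trans ?_ (ENNReal.ofReal_le_ofReal hp)
    rw [ENNReal.ofReal_div_of_pos hh, ENNReal.ofReal_natCast,
      ENNReal.le_div_iff_mul_le (.inl (by simpa using hh)) (.inl ENNReal.ofReal_ne_top), mul_comm]
    exact M.mul_Pinf_SR_le h ν
  have hp0 : 0 ≤ p := le_trans (by positivity) hp
  rw [hcompl, prob_compl_eq_one_sub (M.F_le _ _ hms), ENNReal.ofReal_sub _ hp0,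
    ENNReal.ofReal_one]
  exact tsub_le_tsub_left hfa 1

/-! ### The detection delay -/

/-- An extended natural number exceeds `N` by at most the number of `n` with `N ≤ n + 1 < x`. -/
lemma toENNReal_le_add_tsum {x : ℕ∞} {N : ℕ} (hN : 1 ≤ N) {f : ℕ → ℝ≥0∞}
    (hf : ∀ n : ℕ, N ≤ n + 1 → ((n + 1 : ℕ) : ℕ∞) < x → 1 ≤ f n) :
    (x : ℝ≥0∞) ≤ N + ∑' n, f n := by
  have key : ∀ j : ℕ, (j : ℕ∞) ≤ x → (j : ℝ≥0∞) ≤ N + ∑' n, f n := by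
    intro j hj
    rcases le_total j N with hjN | hjN
    · exact le_add_right (by exact_mod_cast hjN)
    calc (j : ℝ≥0∞) = N + ∑ n ∈ Finset.Ico (N - 1) (j - 1), 1 := by
          rw [Finset.sum_const, Nat.card_Ico, nsmul_eq_mul, mul_one, ← Nat.cast_add]
          congr 1
          omega
      _ ≤ N + ∑ n ∈ Finset.Ico (N - 1) (j - 1), f n := by
          gcongr with n hn
          rw [Finset.mem_Ico] at hn
          refine hf n (by omega) (lt_of_lt_of_le ?_ hj)
          exact_mod_cast (by omega : n + 1 < j)
      _ ≤ N + ∑' n, f n := by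
          gcongr
          exact ENNReal.sum_le_tsum _
  induction x with
  | top =>
    rw [ENat.toENNReal_top]
    exact le_of_tendsto' ENNReal.tendsto_nat_nhds_top fun j => key j le_top
  | coe m => simpa using key m le_rfl

/-- The sum of the worst-case probabilities of a deviation of `Z_{k+n}^k / n` from `I` by more
than `ε`, over `n ≥ 1`; condition (A2) says that it is finite for every `ε > 0`. -/
def deviationSum (I ε : ℝ) : ℝ≥0∞ :=
  ∑' n : ℕ, ⨆ k : ℕ, M.P k {ω | ε < |M.Z (k + (n + 1)) k ω / (n + 1) - I|}

/-- The uniform bound on the delay: past a time `N` with `log h < (I - ε) N`, a delay of more than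
`n` forces `Z_{ν+n}^ν / n` to deviate from `I` by more than `ε`. -/
lemma risk_SR_le {I ε h : ℝ} (hh : 0 < h) (hε : ε < I) {N : ℕ} (hN : 1 ≤ N)
    (hlog : Real.log h < (I - ε) * N) (ν : ℕ) :
    M.risk ν (M.SR h) ≤ N + M.deviationSum I ε := by
  have := M.P_prob ν
  set B : ℕ → Set Ω := fun n => {ω | ε < |M.Z (ν + (n + 1)) ν ω / (n + 1) - I|} with hB
  have hBm : ∀ n, MeasurableSet (B n) := by
    intro n
    have hZ : Measurable (M.Z (ν + (n + 1)) ν) := (M.measurable_Z _ _).mono (M.F_le _) le_rfl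
    exact measurableSet_lt measurable_const
      (continuous_abs.measurable.comp ((hZ.div_const _).sub_const _))
  calc M.risk ν (M.SR h)
      ≤ ∫⁻ ω, (N + ∑' n, (B n).indicator 1 ω) ∂(M.P ν) := by
        refine lintegral_mono fun ω => toENNReal_le_add_tsum hN fun n hNn hlt => ?_
        have hmem : ω ∈ B n := by
          have hgt : ((ν + (n + 1) : ℕ) : ℕ∞) < M.SR h ω := by
            rw [Nat.cast_add, add_comm]
            exact lt_tsub_iff_right.1 hlt
          have hst : M.SRstat (ν + (n + 1)) ω < h := by
            by_contra hcon
            exact absurd (M.SR_le_of_le (by omega) (not_lt.1 hcon)) (not_le.2 hgt)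
          have hexp : Real.exp (M.Z (ν + (n + 1)) ν ω) ≤ M.SRstat (ν + (n + 1)) ω :=
            Finset.single_le_sum (f := fun k => Real.exp (M.Z (ν + (n + 1)) k ω))
              (fun k _ => (Real.exp_pos _).le) (Finset.mem_range.2 (by omega))
          have hZ : M.Z (ν + (n + 1)) ν ω < (I - ε) * (n + 1) := by
            have h1 : M.Z (ν + (n + 1)) ν ω < Real.log h :=
              (Real.lt_log_iff_exp_lt hh).2 (hexp.trans_lt hst)
            have h2 : (N : ℝ) ≤ n + 1 := by exact_mod_cast hNn
            have h3 : (I - ε) * N ≤ (I - ε) * (n + 1) :=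
              mul_le_mul_of_nonneg_left h2 (by linarith)
            linarith
          have hdiv : M.Z (ν + (n + 1)) ν ω / (n + 1) < I - ε :=
            (div_lt_iff₀ (by positivity)).2 hZ
          have hneg : ε < -(M.Z (ν + (n + 1)) ν ω / (n + 1) - I) := by linarith
          exact hneg.trans_le (neg_le_abs _)
        simp [hmem]
    _ = N + ∑' n, M.P ν (B n) := by
        rw [lintegral_add_left measurable_const, lintegral_tsum fun n =>
          (measurable_one.indicator (hBm n)).aemeasurable]
        simp [lintegral_indicator_one (hBm _)]
    _ ≤ N + M.deviationSum I ε := by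
        unfold deviationSum
        gcongr with n
        exact le_iSup (fun k => M.P k {ω | ε < |M.Z (k + (n + 1)) k ω / (n + 1) - I|}) ν

end ChangePointModel

/-! ### Asymptotics -/

lemma tendsto_abs_log_nhdsGT_zero :
    Tendsto (fun α : ℝ => |Real.log α|) (𝓝[>] (0 : ℝ)) atTop :=
  tendsto_abs_atBot_atTop.comp Real.tendsto_log_nhdsGT_zero

lemma tendsto_abs_log_mul_div :
    Tendsto (fun α : ℝ => |Real.log α| * α / (1 - α)) (𝓝[>] (0 : ℝ)) (𝓝 0) := by
  have h1 : Tendsto (fun α : ℝ => |Real.log α| * α) (𝓝[>] (0 : ℝ)) (𝓝 0) := by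
    have := (tendsto_log_mul_rpow_nhdsGT_zero one_pos).abs
    rw [abs_zero] at this
    refine this.congr' ?_
    filter_upwards [self_mem_nhdsWithin] with α hα
    rw [Real.rpow_one, abs_mul, abs_of_pos (show (0 : ℝ) < α from hα)]
  have h2 : Tendsto (fun α : ℝ => 1 - α) (𝓝[>] (0 : ℝ)) (𝓝 (1 - 0)) :=
    (tendsto_const_nhds.sub tendsto_id).mono_left nhdsWithin_le_nhds
  have h3 := h1.div h2 (by norm_num)
  rw [zero_div] at h3
  exact h3

/-- The normalized delay bound tends to `1 / (I - ε)`; `p` stands for the false alarm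
probability by which the conditional risk is inflated. -/
lemma tendsto_majorant {r p : ℝ → ℝ} {c C : ℝ}
    (hr : Tendsto (fun α : ℝ => r α / |Real.log α|) (𝓝[>] (0 : ℝ)) (𝓝 0))
    (hp : Tendsto p (𝓝[>] (0 : ℝ)) (𝓝 0)) :
    Tendsto (fun α : ℝ => ENNReal.ofReal
      (((|Real.log α| + r α) / c + 1 + C) / (1 - p α) / |Real.log α|)) (𝓝[>] (0 : ℝ))
      (𝓝 (ENNReal.ofReal (1 / c))) := by
  refine ENNReal.tendsto_ofReal ?_
  have hL := tendsto_abs_log_nhdsGT_zero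
  have h1 : Tendsto (fun α : ℝ => (1 + C) / |Real.log α|) (𝓝[>] (0 : ℝ)) (𝓝 0) :=
    tendsto_const_nhds.div_atTop hL
  have h2 : Tendsto (fun α : ℝ => 1 - p α) (𝓝[>] (0 : ℝ)) (𝓝 (1 - 0)) :=
    tendsto_const_nhds.sub hp
  have h3 := ((((tendsto_const_nhds (x := (1 : ℝ))).add hr).div_const c).add h1).div h2
    (by norm_num)
  have h4 : ((1 + 0) / c + 0) / (1 - 0) = 1 / c := by simp
  rw [h4] at h3
  refine h3.congr' ?_
  filter_upwards [hL.eventually_gt_atTop 0] with α hα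
  simp only [Pi.div_apply]
  rw [div_right_comm _ (1 - p α)]
  congr 1
  field_simp
  ring

lemma limsup_le_of_forall_eps {f : ℝ → ℝ≥0∞} {I : ℝ} (hI : 0 < I)
    (hf : ∀ ε ∈ Ioo 0 I, ∃ g : ℝ → ℝ≥0∞,
      Tendsto g (𝓝[>] (0 : ℝ)) (𝓝 (ENNReal.ofReal (1 / (I - ε)))) ∧
      ∀ᶠ α in 𝓝[>] (0 : ℝ), f α ≤ g α) :
    limsup f (𝓝[>] (0 : ℝ)) ≤ ENNReal.ofReal (1 / I) := by
  have hlim : Tendsto (fun ε : ℝ => ENNReal.ofReal (1 / (I - ε))) (𝓝[>] (0 : ℝ))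
      (𝓝 (ENNReal.ofReal (1 / I))) := by
    refine ENNReal.tendsto_ofReal ?_
    have h2 : Tendsto (fun ε : ℝ => I - ε) (𝓝[>] (0 : ℝ)) (𝓝 (I - 0)) :=
      (tendsto_const_nhds.sub tendsto_id).mono_left nhdsWithin_le_nhds
    have h3 := (tendsto_const_nhds (x := (1 : ℝ))).div h2 (by simpa using hI.ne')
    rw [sub_zero] at h3
    exact h3
  refine ge_of_tendsto hlim ?_
  filter_upwards [Ioo_mem_nhdsGT hI] with ε hε
  obtain ⟨g, hg, hfg⟩ := hf ε hε
  rw [← hg.limsup_eq]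
  exact limsup_le_limsup hfg

/-- The delay bound for the threshold `(1 - α) / (ϱ α)`, whose logarithm is at most
`|log α| + |log ϱ|`. -/
lemma risk_SR_threshold_le {Ω : Type} [m0 : MeasurableSpace Ω] (M : ChangePointModel Ω)
    {I ε α r : ℝ} (hA2 : M.CondA2 I) (hε : ε ∈ Ioo 0 I) (hα : α ∈ Ioo (0 : ℝ) 1)
    (hr : r ∈ Ioo (0 : ℝ) 1) (ν : ℕ) :
    M.risk ν (M.SR ((1 - α) / (r * α))) ≤
      ENNReal.ofReal ((|Real.log α| + |Real.log r|) / (I - ε) + 1 +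
        (M.deviationSum I ε).toReal) := by
  obtain ⟨hε0, hεI⟩ := hε
  obtain ⟨hα0, hα1⟩ := hα
  obtain ⟨hr0, hr1⟩ := hr
  have hc : 0 < I - ε := sub_pos.2 hεI
  set y := (|Real.log α| + |Real.log r|) / (I - ε) with hy
  have hy0 : 0 ≤ y := by positivity
  have hh : 0 < (1 - α) / (r * α) := div_pos (sub_pos.2 hα1) (by positivity)
  have hlog : Real.log ((1 - α) / (r * α)) ≤ |Real.log α| + |Real.log r| := by
    rw [Real.log_div (sub_pos.2 hα1).ne' (by positivity), Real.log_mul hr0.ne' hα0.ne']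
    have h1 : Real.log (1 - α) ≤ 0 := Real.log_nonpos (by linarith) (by linarith)
    have h2 := neg_abs_le (Real.log α)
    have h3 := neg_abs_le (Real.log r)
    linarith
  have hN : Real.log ((1 - α) / (r * α)) < (I - ε) * ((⌊y⌋₊ + 1 : ℕ) : ℝ) := by
    refine hlog.trans_lt ?_
    rw [mul_comm, ← div_lt_iff₀ hc]
    exact_mod_cast Nat.lt_floor_add_one y
  refine (M.risk_SR_le hh hεI (Nat.le_add_left 1 _) hN ν).trans ?_
  rw [ENNReal.ofReal_add (by positivity) ENNReal.toReal_nonneg,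
    ENNReal.ofReal_toReal (show M.deviationSum I ε < ⊤ from hA2 ε hε0).ne]
  gcongr
  rw [← ENNReal.ofReal_natCast]
  refine ENNReal.ofReal_le_ofReal ?_
  push_cast
  linarith [Nat.floor_le hy0]

/-- Under condition (A2) and `ϱ_α → 0`, `|log ϱ_α|/|log α| → 0`,
the SR procedure `T_α = T((1-α)/(ϱ_α α))` satisfies
(i) `limsup_{α→0} sup_ν R_ν(T_α)/|log α| ≤ 1/I`, and
(ii) if moreover `k*_α → ∞` and `|log α| + k*_α log(1-ϱ_α) → +∞`, then
`limsup_{α→0} max_{0≤ν≤k*_α} R*_ν(T_α)/|log α| ≤ 1/I`. -/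
theorem statement2
    {Ω : Type} [m0 : MeasurableSpace Ω] (M : ChangePointModel Ω)
    (I : ℝ) (hI : 0 < I) (hA2 : M.CondA2 I)
    (ϱ : ℝ → ℝ) (hϱmem : ∀ α ∈ Set.Ioo (0 : ℝ) 1, ϱ α ∈ Set.Ioo (0 : ℝ) 1)
    (hϱ0 : Tendsto ϱ (𝓝[>] (0 : ℝ)) (𝓝 0))
    (hϱlog : Tendsto (fun α : ℝ => |Real.log (ϱ α)| / |Real.log α|) (𝓝[>] (0 : ℝ)) (𝓝 0)) :
    (Filter.limsup (fun α : ℝ =>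
        (⨆ ν : ℕ, M.risk ν (M.SR ((1 - α) / (ϱ α * α)))) / ENNReal.ofReal |Real.log α|)
        (𝓝[>] (0 : ℝ)) ≤ ENNReal.ofReal (1 / I)) ∧
    (∀ kstar : ℝ → ℕ,
      Tendsto kstar (𝓝[>] (0 : ℝ)) atTop →
      Tendsto (fun α : ℝ => |Real.log α| + (kstar α : ℝ) * Real.log (1 - ϱ α))
        (𝓝[>] (0 : ℝ)) atTop →
      Filter.limsup (fun α : ℝ =>
        (⨆ ν ∈ Set.Iic (kstar α), M.crisk ν (M.SR ((1 - α) / (ϱ α * α))))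
          / ENNReal.ofReal |Real.log α|)
        (𝓝[>] (0 : ℝ)) ≤ ENNReal.ofReal (1 / I)) := by
  have hmem1 : ∀ᶠ α in 𝓝[>] (0 : ℝ), α ∈ Ioo (0 : ℝ) 1 := Ioo_mem_nhdsGT one_pos
  have hL := tendsto_abs_log_nhdsGT_zero
  refine ⟨?_, fun kstar _ hk => ?_⟩
  · refine limsup_le_of_forall_eps hI fun ε hε => ⟨_, tendsto_majorant (p := fun _ => 0) (c := I - ε)
      (C := (M.deviationSum I ε).toReal) hϱlog tendsto_const_nhds, ?_⟩
    filter_upwards [hmem1, hL.eventually_gt_atTop 0] with α hα hLα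
    rw [ENNReal.ofReal_div_of_pos hLα]
    gcongr
    refine iSup_le fun ν => ?_
    simpa using risk_SR_threshold_le M hA2 hε hα (hϱmem α hα) ν
  · refine limsup_le_of_forall_eps hI fun ε hε => ⟨_, tendsto_majorant (c := I - ε)
      (C := (M.deviationSum I ε).toReal) hϱlog tendsto_abs_log_mul_div, ?_⟩
    filter_upwards [hmem1, hL.eventually_gt_atTop 0, hk.eventually_ge_atTop 0,
      tendsto_abs_log_mul_div.eventually_lt_const one_pos] with α hα hLα hkα hpα
    obtain ⟨hr0, hr1⟩ := hϱmem α hα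
    rw [ENNReal.ofReal_div_of_pos hLα]
    gcongr
    refine iSup₂_le fun ν hν => ?_
    rw [ChangePointModel.crisk, ENNReal.ofReal_div_of_pos (sub_pos.2 hpα)]
    refine ENNReal.div_le_div (risk_SR_threshold_le M hA2 hε hα (hϱmem α hα) ν)
      (M.le_P_lt_SR (div_pos (sub_pos.2 hα.2) (mul_pos hr0 hα.1)) ?_)
    -- `k* ϱ ≤ -k* log (1 - ϱ) ≤ |log α|` turns `ν / h` into a bound that does not involve `ϱ`.
    have h1 : Real.log (1 - ϱ α) ≤ -ϱ α := by
      linarith [Real.log_le_sub_one_of_pos (sub_pos.2 hr1)]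
    have h2 : (ν : ℝ) ≤ kstar α := by exact_mod_cast hν
    have h3 : (ν : ℝ) * ϱ α ≤ |Real.log α| := by
      have h4 : (ν : ℝ) * ϱ α ≤ kstar α * ϱ α := by gcongr
      have h5 : (kstar α : ℝ) * Real.log (1 - ϱ α) ≤ kstar α * (-ϱ α) := by gcongr
      linarith
    have hα0 : 0 < α := hα.1
    have h1α : 0 < 1 - α := sub_pos.2 hα.2
    rw [div_div_eq_mul_div, ← mul_assoc]
    gcongr
end
end
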